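/- For all natural numbers N and n, the cardinality Nat.card of the set of tuples t : Fin n → (Fin N → ℤ) such that for every i there exists j : Fin N with t i = Pi.single j 1 or t i = -(Pi.single j 1) and ∑ i, t i = 0, equals the cardinality Nat.card of the set of tuples k : Fin n → ℤ such that for every i one has k i ≠ 0 and |k i| ≤ N, and ∑ i, ((Int.sign (k i) : ℝ) * Real.exp ((k i).natAbs : ℝ)) = 0. -/

import Mathlib

open Polynomial in
lemma expIndepAux (N : ℕ) (a : ℤ) (c : Fin N → ℤ)
    (h : (a : ℂ) + ∑ j : Fin N, (c j : ℂ) * Complex.exp ((j : ℕ) + 1 : ℂ) = 0) : a = 0 := by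
  by_contra ha
  set f : ℤ[X] := ∏ j : Fin N, (X - C (((j : ℕ) : ℤ) + 1)) with hf
  have hf0 : f.eval 0 ≠ 0 := by
    rw [hf, eval_prod, Finset.prod_ne_zero_iff]
    intro j _
    simp only [eval_sub, eval_X, eval_C]
    omega
  have hfne : f ≠ 0 := by
    rintro h0
    rw [h0] at hf0
    simp at hf0
  have hroot : ∀ j : Fin N, ((j : ℕ) + 1 : ℂ) ∈ f.aroots ℂ := by
    intro j
    rw [mem_aroots]
    refine ⟨hfne, ?_⟩
    rw [hf, map_prod]
    apply Finset.prod_eq_zero (Finset.mem_univ j)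
    simp
  obtain ⟨K, hK⟩ := LindemannWeierstrass.exp_polynomial_approx f hf0
  set A : ℝ := ∑ j : Fin N, |(c j : ℝ)| with hA
  have hlim : Filter.Tendsto (fun p : ℕ => A * (K * (K ^ p / (p.factorial : ℝ)))) Filter.atTop
      (nhds 0) := by
    have := ((FloorSemiring.tendsto_pow_div_factorial_atTop K).const_mul K).const_mul A
    simpa using this
  have hev := hlim.eventually (gt_mem_nhds (zero_lt_one))
  rw [Filter.eventually_atTop] at hev
  obtain ⟨p0, hp0⟩ := hev
  obtain ⟨p, hpge, hp⟩ := Nat.exists_infinite_primes (p0 + (f.eval 0).natAbs + a.natAbs + 2)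
  obtain ⟨m, hm, g, -, hg⟩ := hK p (by omega) hp
  set M : ℤ := m * a + p * ∑ j : Fin N, c j * g.eval (((j : ℕ) : ℤ) + 1) with hM
  have hMne : M ≠ 0 := by
    intro h0
    have hd : (p : ℤ) ∣ m * a := by
      have : (p : ℤ) ∣ M := by rw [h0]; exact dvd_zero _
      rw [hM] at this
      exact (dvd_add_left (dvd_mul_right _ _)).1 this
    rcases (Nat.prime_iff_prime_int.1 hp).dvd_or_dvd hd with h1 | h1
    · exact hm h1
    · have := Nat.le_of_dvd (Int.natAbs_pos.2 ha) (Int.natCast_dvd.1 h1)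
      omega
  have hgev : ∀ j : Fin N, aeval ((j : ℕ) + 1 : ℂ) g = ((g.eval (((j : ℕ) : ℤ) + 1) : ℤ) : ℂ) := by
    intro j
    have := aeval_algebraMap_apply_eq_algebraMap_eval (A := ℂ) (((j : ℕ) : ℤ) + 1) g
    simpa using this
  have hMeq : (M : ℂ) = - ∑ j : Fin N, (c j : ℂ) *
      (m • Complex.exp ((j : ℕ) + 1 : ℂ) - p • aeval ((j : ℕ) + 1 : ℂ) g) := by
    have h2 : (M : ℂ) = (m : ℂ) * a + p * ∑ j : Fin N, (c j : ℂ) * aeval ((j : ℕ) + 1 : ℂ) g := by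
      simp only [hgev, hM]
      push_cast
      rfl
    have h3 : ∑ j : Fin N, (c j : ℂ) *
      (m • Complex.exp ((j : ℕ) + 1 : ℂ) - p • aeval ((j : ℕ) + 1 : ℂ) g) =
      m * ∑ j : Fin N, (c j : ℂ) * Complex.exp ((j : ℕ) + 1 : ℂ) -
       p * ∑ j : Fin N, (c j : ℂ) * aeval ((j : ℕ) + 1 : ℂ) g := by
      rw [Finset.mul_sum, Finset.mul_sum, ← Finset.sum_sub_distrib]
      refine Finset.sum_congr rfl fun j _ => ?_
      simp only [zsmul_eq_mul, nsmul_eq_mul]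
      ring
    rw [h2, h3]
    linear_combination (m : ℂ) * h
  have hle : ‖(M : ℂ)‖ ≤ A * (K ^ p / ((p - 1).factorial : ℝ)) := by
    rw [hMeq, norm_neg, hA, Finset.sum_mul]
    refine (norm_sum_le _ _).trans (Finset.sum_le_sum fun j _ => ?_)
    rw [norm_mul, Complex.norm_intCast]
    exact mul_le_mul_of_nonneg_left (hg (hroot j)) (abs_nonneg _)
  have hlt := hp0 (p - 1) (by omega)
  have hKp : K ^ p = K * K ^ (p - 1) := by
    rw [← pow_succ', Nat.sub_add_cancel hp.one_le]
  have h1 : (1 : ℝ) ≤ ‖(M : ℂ)‖ := by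
    rw [Complex.norm_intCast]
    exact_mod_cast Int.one_le_abs hMne
  rw [hKp, mul_div_assoc] at hle
  linarith

lemma expIndep (N : ℕ) (c : Fin N → ℤ)
    (h : ∑ j : Fin N, (c j : ℂ) * Complex.exp ((j : ℕ) + 1 : ℂ) = 0) : c = 0 := by
  induction N with
  | zero => exact Subsingleton.elim _ _
  | succ N ih =>
    have h2 : (c 0 : ℂ) + ∑ j : Fin N, (c j.succ : ℂ) * Complex.exp ((j : ℕ) + 1 : ℂ) = 0 := by
      have : Complex.exp 1 * ((c 0 : ℂ) +
          ∑ j : Fin N, (c j.succ : ℂ) * Complex.exp ((j : ℕ) + 1 : ℂ)) = 0 := by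
        rw [← h, Fin.sum_univ_succ, mul_add, Finset.mul_sum]
        congr 1
        · simp [mul_comm]
        · refine Finset.sum_congr rfl fun j _ => ?_
          rw [Fin.val_succ, Nat.cast_succ, Complex.exp_add ((j : ℕ) + 1 : ℂ) 1]
          ring
      exact (mul_eq_zero.1 this).resolve_left (Complex.exp_ne_zero _)
    have h0 := expIndepAux N (c 0) (fun j => c j.succ) h2
    have h3 := ih (fun j => c j.succ) (by simpa [h0] using h2)
    funext j
    refine Fin.cases h0 (fun i => congrFun h3 i) j

/-- the vector encoding a signed step -/
def stepVec (N : ℕ) (k : ℤ) : Fin N → ℤ := fun j => if (j : ℕ) + 1 = k.natAbs then k.sign else 0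

lemma stepVec_sum (N : ℕ) (k : ℤ) (h0 : k ≠ 0) (hN : |k| ≤ (N : ℤ)) :
    ∑ j : Fin N, (stepVec N k j : ℂ) * Complex.exp ((j : ℕ) + 1 : ℂ) =
      (k.sign : ℂ) * Complex.exp (k.natAbs : ℂ) := by
  have hlt : k.natAbs - 1 < N := by rw [abs_le] at hN; omega
  have hs : k.natAbs - 1 + 1 = k.natAbs := by omega
  rw [Finset.sum_eq_single (⟨k.natAbs - 1, hlt⟩ : Fin N)]
  · have : ((k.natAbs - 1 : ℕ) : ℂ) + 1 = (k.natAbs : ℂ) := by exact_mod_cast hs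
    simp only [stepVec, hs, if_true, this]
  · intro j _ hj
    have : ¬ ((j : ℕ) + 1 = k.natAbs) := by
      intro h
      apply hj
      ext
      simp only
      omega
    simp [stepVec, this]
  · simp

lemma stepVec_pos (N : ℕ) (j : Fin N) : stepVec N (((j : ℕ) : ℤ) + 1) = Pi.single j 1 := by
  have hs : (((j : ℕ) : ℤ) + 1).sign = 1 := Int.sign_eq_one_of_pos (by omega)
  funext i
  simp only [stepVec, hs, Pi.single_apply, Fin.ext_iff]
  congr 1
  apply propext
  omega

lemma stepVec_neg (N : ℕ) (k : ℤ) : stepVec N (-k) = - stepVec N k := by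
  funext i
  simp only [stepVec, Int.natAbs_neg, Int.sign_neg, Pi.neg_apply]
  split_ifs <;> simp

lemma stepVec_exists (N : ℕ) (k : ℤ) (h0 : k ≠ 0) (hN : |k| ≤ (N : ℤ)) :
    ∃ j : Fin N, stepVec N k = Pi.single j 1 ∨ stepVec N k = -(Pi.single j 1) := by
  have hlt : k.natAbs - 1 < N := by rw [abs_le] at hN; omega
  refine ⟨⟨k.natAbs - 1, hlt⟩, ?_⟩
  rw [← stepVec_pos, ← stepVec_neg]
  rcases lt_or_gt_of_ne h0 with h | h
  · right
    congr 1
    simp only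
    omega
  · left
    congr 1
    simp only
    omega

lemma stepVec_inj (N : ℕ) (k l : ℤ) (h0 : k ≠ 0) (hN : |k| ≤ (N : ℤ))
    (h : stepVec N k = stepVec N l) : k = l := by
  have hlt : k.natAbs - 1 < N := by rw [abs_le] at hN; omega
  have hs : k.natAbs - 1 + 1 = k.natAbs := by omega
  have h1 := congrFun h ⟨k.natAbs - 1, hlt⟩
  simp only [stepVec, hs, if_true] at h1
  split_ifs at h1 with h2
  · rw [← Int.sign_mul_natAbs k, ← Int.sign_mul_natAbs l, h1, h2]
  · exact absurd (Int.sign_eq_zero_iff_zero.1 h1) h0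

lemma stepVec_balanced (N n : ℕ) (k : Fin n → ℤ) (hk : ∀ i, k i ≠ 0 ∧ |k i| ≤ (N : ℤ)) :
    ∑ i, stepVec N (k i) = 0 ↔
      ∑ i, ((Int.sign (k i) : ℝ) * Real.exp ((k i).natAbs : ℝ)) = 0 := by
  have key : ((∑ i, ((Int.sign (k i) : ℝ) * Real.exp ((k i).natAbs : ℝ)) : ℝ) : ℂ) =
      ∑ j : Fin N, (((∑ i, stepVec N (k i)) j : ℤ) : ℂ) * Complex.exp ((j : ℕ) + 1 : ℂ) := by
    simp only [Finset.sum_apply, Int.cast_sum, Finset.sum_mul]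
    rw [Finset.sum_comm]
    push_cast
    refine Finset.sum_congr rfl fun i _ => ?_
    rw [stepVec_sum N (k i) (hk i).1 (hk i).2]
  constructor
  · intro h
    rw [h] at key
    simp only [Pi.zero_apply, Int.cast_zero, zero_mul, Finset.sum_const_zero] at key
    exact_mod_cast key
  · intro h
    rw [h] at key
    exact expIndep N _ (by rw [← key]; simp)

theorem card_balanced_tuples_eq_card_axis_lattice_paths (N n : ℕ) :
    Nat.card {t : Fin n → (Fin N → ℤ) //
        (∀ i, ∃ j : Fin N, t i = Pi.single j 1 ∨ t i = -(Pi.single j 1)) ∧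
        ∑ i, t i = 0} =
      Nat.card {k : Fin n → ℤ //
        (∀ i, k i ≠ 0 ∧ |k i| ≤ (N : ℤ)) ∧
        ∑ i, ((Int.sign (k i) : ℝ) * Real.exp ((k i).natAbs : ℝ)) = 0} := by
  symm
  refine Nat.card_eq_of_bijective (fun k => ⟨fun i => stepVec N (k.1 i),
    fun i => stepVec_exists N _ (k.2.1 i).1 (k.2.1 i).2,
    (stepVec_balanced N n k.1 k.2.1).2 k.2.2⟩) ⟨?_, ?_⟩
  · rintro ⟨k, hk⟩ ⟨l, hl⟩ h
    have h' := congrArg Subtype.val h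
    apply Subtype.ext
    funext i
    exact stepVec_inj N _ _ (hk.1 i).1 (hk.1 i).2 (congrFun h' i)
  · rintro ⟨t, ht, hs⟩
    have hex : ∀ i, ∃ k : ℤ, (k ≠ 0 ∧ |k| ≤ (N : ℤ)) ∧ stepVec N k = t i := by
      intro i
      obtain ⟨j, h | h⟩ := ht i
      · refine ⟨((j : ℕ) : ℤ) + 1, ⟨by omega, ?_⟩, by rw [stepVec_pos, h]⟩
        have := j.2
        rw [abs_le]; omega
      · refine ⟨-(((j : ℕ) : ℤ) + 1), ⟨by omega, ?_⟩, by rw [stepVec_neg, stepVec_pos, h]⟩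
        have := j.2
        rw [abs_le]; omega
    choose k hk hkt using hex
    refine ⟨⟨k, hk, (stepVec_balanced N n k hk).1 ?_⟩, ?_⟩
    · simp only [hkt]
      exact hs
    · apply Subtype.ext
      funext i
      exact hkt i
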